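/- The axiom scheme notelim (¬φ → (φ → ψ)) is not provable from the set of axiom schemes TMM ∖ {notelim}. -/

import Mathlib

set_option autoImplicit false

/-! ## Megill-style scheme-level formalization of first-order logic -/

/-- Metavariables: variable metavariables `vr i` (standing for x_i) and
formula metavariables `fm i` (standing for φ_i). -/
inductive MV : Type
  | vr (i : ℕ) : MV
  | fm (i : ℕ) : MV
  deriving DecidableEq

/-- Metaformulas over the pure language of equality. -/
inductive MF : Type
  | phi (i : ℕ) : MF
  | eq (i j : ℕ) : MF
  | imp (a b : MF) : MF
  | not (a : MF) : MF
  | all (i : ℕ) (a : MF) : MF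
  deriving DecidableEq

/-- The set of metavariables occurring in a metaformula. -/
def MF.OC : MF → Set MV
  | .phi i => {MV.fm i}
  | .eq i j => {MV.vr i, MV.vr j}
  | .imp a b => a.OC ∪ b.OC
  | .not a => a.OC
  | .all i a => insert (MV.vr i) a.OC

/-- A scheme: finitely many hypotheses, a conclusion, and disjoint-variable
(DV) conditions given as unordered pairs of metavariables. -/
structure Scheme : Type where
  hyps : Finset MF
  concl : MF
  dv : Set (Sym2 MV)

/-- Metavariables occurring in a scheme (in its hypotheses or conclusion). -/
def Scheme.OC (Φ : Scheme) : Set MV :=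
  {m | ∃ h ∈ Φ.hyps, m ∈ h.OC} ∪ Φ.concl.OC

/-- A (type-preserving) substitution: variable metavariables go to variable
metavariables, formula metavariables go to metaformulas; it is the identity
outside a finite set. -/
structure Subst : Type where
  vr : ℕ → ℕ
  fm : ℕ → MF
  finVr : {i : ℕ | vr i ≠ i}.Finite
  finFm : {i : ℕ | fm i ≠ MF.phi i}.Finite

/-- Action of a substitution on a metaformula. -/
def MF.substMF (σ : Subst) : MF → MF
  | .phi i => σ.fm i
  | .eq i j => .eq (σ.vr i) (σ.vr j)
  | .imp a b => .imp (a.substMF σ) (b.substMF σ)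
  | .not a => .not (a.substMF σ)
  | .all i a => .all (σ.vr i) (a.substMF σ)

/-- The set of metavariables occurring in the image of a metavariable. -/
def Subst.appMV (σ : Subst) : MV → Set MV
  | .vr i => {MV.vr (σ.vr i)}
  | .fm i => (σ.fm i).OC

/-- σ is the identity on a given metavariable. -/
def Subst.Fixes (σ : Subst) : MV → Prop
  | .vr i => σ.vr i = i
  | .fm i => σ.fm i = MF.phi i

/-- A substitution is legitimate on a scheme if it does not violate its
DV conditions. -/
def Subst.Legit (σ : Subst) (Φ : Scheme) : Prop :=
  ∀ m n : MV, s(m, n) ∈ Φ.dv → σ.appMV m ∩ σ.appMV n = ∅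

/-- Propagation of DV conditions along a substitution. -/
def Subst.dvMap (σ : Subst) (D : Set (Sym2 MV)) : Set (Sym2 MV) :=
  {q | ∃ m' n' m n : MV, s(m', n') ∈ D ∧ m ∈ σ.appMV m' ∧ n ∈ σ.appMV n' ∧ q = s(m, n)}

/-- Action of a substitution on a scheme. -/
def Scheme.substS (Φ : Scheme) (σ : Subst) : Scheme :=
  ⟨Φ.hyps.image (MF.substMF σ), Φ.concl.substMF σ, σ.dvMap Φ.dv⟩

/-- `Φ.Inst Ψ` : Ψ is an instance of Φ, i.e. the result of a legitimate
substitution, possibly followed by the addition of DV conditions. -/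
def Scheme.Inst (Φ Ψ : Scheme) : Prop :=
  ∃ σ : Subst, σ.Legit Φ ∧ Ψ.hyps = Φ.hyps.image (MF.substMF σ) ∧
    Ψ.concl = Φ.concl.substMF σ ∧ σ.dvMap Φ.dv ⊆ Ψ.dv

/-- Metavariables occurring in a list of metaformulas. -/
def listOC (P : List MF) : Set MV := {m | ∃ f ∈ P, m ∈ f.OC}

/-- The DV conditions of a proof `P` of the scheme `Φ`: those of `Φ`, plus all
pairs {m, n} where m is a dummy metavariable of `P` and n occurs in `P`. -/
def proofDV (Φ : Scheme) (P : List MF) : Set (Sym2 MV) :=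
  Φ.dv ∪ {q | ∃ m n : MV, m ∈ listOC P ∧ m ∉ Φ.OC ∧ n ∈ listOC P ∧ q = s(m, n)}

/-- `P` is a proof of the scheme `Φ` from the set `S` of schemes. -/
def IsProof (S : Set Scheme) (Φ : Scheme) (P : List MF) : Prop :=
  P ≠ [] ∧ P.getLast? = some Φ.concl ∧
  ∀ (k : ℕ) (hk : k < P.length),
    P.get ⟨k, hk⟩ ∈ Φ.hyps ∨
    ∃ hs : Finset MF,
      (∀ h ∈ hs, ∃ (l : ℕ) (hl : l < k), P.get ⟨l, hl.trans hk⟩ = h) ∧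
      ∃ Ξ ∈ S, Ξ.Inst ⟨hs, P.get ⟨k, hk⟩, proofDV Φ P⟩

/-- `S ⊢ Φ` : the scheme `Φ` is provable from the set `S` of schemes. -/
def Provable (S : Set Scheme) (Φ : Scheme) : Prop := ∃ P : List MF, IsProof S Φ P

/-! ## Object level: first-order formulas and semantics -/

/-- First-order formulas over the pure language of equality, with
individual variables v_i. -/
inductive FM : Type
  | eq (i j : ℕ) : FM
  | imp (a b : FM) : FM
  | not (a : FM) : FM
  | all (i : ℕ) (a : FM) : FM
  deriving DecidableEq

/-- Variables occurring in a first-order formula. -/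
def FM.vars : FM → Set ℕ
  | .eq i j => {i, j}
  | .imp a b => a.vars ∪ b.vars
  | .not a => a.vars
  | .all i a => insert i a.vars

/-- An object-substitution: variable metavariables go to individual variables,
formula metavariables go to first-order formulas. -/
structure OSubst : Type where
  vr : ℕ → ℕ
  fm : ℕ → FM

/-- Action of an object-substitution on a metaformula, yielding a first-order
formula (an object-instance). -/
def MF.osubst (τ : OSubst) : MF → FM
  | .phi i => τ.fm i
  | .eq i j => .eq (τ.vr i) (τ.vr j)
  | .imp a b => .imp (a.osubst τ) (b.osubst τ)
  | .not a => .not (a.osubst τ)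
  | .all i a => .all (τ.vr i) (a.osubst τ)

/-- Variables occurring in the image of a metavariable. -/
def OSubst.appVars (τ : OSubst) : MV → Set ℕ
  | .vr i => {τ.vr i}
  | .fm i => (τ.fm i).vars

/-- An object-substitution is legitimate on a scheme if images of DV-paired
metavariables share no variables. -/
def OSubst.Legit (τ : OSubst) (Φ : Scheme) : Prop :=
  ∀ m n : MV, s(m, n) ∈ Φ.dv → τ.appVars m ∩ τ.appVars n = ∅

/-- Evaluation of a first-order formula in a structure with domain `D`
(equality interpreted as equality) under an assignment `ρ`. -/
def FM.eval {D : Type} (ρ : ℕ → D) : FM → Prop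
  | .eq i j => ρ i = ρ j
  | .imp a b => a.eval ρ → b.eval ρ
  | .not a => ¬ a.eval ρ
  | .all i a => ∀ d : D, a.eval (Function.update ρ i d)

/-- Validity of a first-order formula in the structure with domain `D`. -/
def FM.Valid (D : Type) (f : FM) : Prop := ∀ ρ : ℕ → D, f.eval ρ

/-- A scheme is true if for every legitimate object-instance and every
nonempty domain, the conclusion is valid whenever all hypotheses are. -/
def Scheme.IsTrue (Φ : Scheme) : Prop :=
  ∀ τ : OSubst, τ.Legit Φ →
    ∀ D : Type, Nonempty D →
      (∀ h ∈ Φ.hyps, FM.Valid D (h.osubst τ)) → FM.Valid D (Φ.concl.osubst τ)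

/-! ## (i,j)-transforms and supertruth -/

/-- Auxiliary: (i,j)-transform with a flag recording whether we are inside the
scope of a quantifier ∀x_i. -/
def MF.transfAux (i j : ℕ) : MF → Bool → MF
  | .phi k, _ => .phi k
  | .eq a b, ins =>
      .eq (if ins = true ∧ a = j then i else a) (if ins = true ∧ b = j then i else b)
  | .imp a b, ins => .imp (a.transfAux i j ins) (b.transfAux i j ins)
  | .not a, ins => .not (a.transfAux i j ins)
  | .all k a, ins =>
      .all (if ins = true ∧ k = j then i else k) (a.transfAux i j (ins || decide (k = i)))

/-- The (i,j)-transform of a metaformula: replace every occurrence of x_j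
lying within the scope of a quantifier ∀x_i by x_i. -/
def MF.transform (i j : ℕ) (f : MF) : MF := f.transfAux i j false

/-- The (i,j)-transform of a scheme: transform hypotheses and conclusion,
keep the DV conditions. -/
def Scheme.transform (i j : ℕ) (Φ : Scheme) : Scheme :=
  ⟨Φ.hyps.image (MF.transform i j), Φ.concl.transform i j, Φ.dv⟩

/-- The (i,j)-transform (and the {i,j}-transform) is legitimate on a scheme
if {x_i, x_j} is not among its DV conditions. -/
def Scheme.TLegit (i j : ℕ) (Φ : Scheme) : Prop := s(MV.vr i, MV.vr j) ∉ Φ.dv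

/-- A (hypothesis-free) scheme is presupertrue if all the legitimate
(i,j)-transforms of all its instances (including itself) are true. -/
def Scheme.PreST (Φ : Scheme) : Prop :=
  ∀ Ψ : Scheme, (Ψ = Φ ∨ Φ.Inst Ψ) → ∀ i j : ℕ, Ψ.TLegit i j → (Ψ.transform i j).IsTrue

/-- A scheme is supertrue if every instance of it (including itself) satisfies:
whenever all legitimate (i,j)-transforms of all instances of each of its
hypotheses (taken as hypothesis-free schemes with the inherited DV conditions)
are true, all legitimate (i,j)-transforms of all instances of its conclusion
are true. -/
def Scheme.Supertrue (Φ : Scheme) : Prop :=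
  ∀ Ψ : Scheme, (Ψ = Φ ∨ Φ.Inst Ψ) →
    (∀ h ∈ Ψ.hyps, Scheme.PreST ⟨∅, h, Ψ.dv⟩) → Scheme.PreST ⟨∅, Ψ.concl, Ψ.dv⟩

/-- The {i,j}-transform of a metaformula: the composite of the (i,j)-transform
and the (j,i)-transform, the one with smaller first index performed first. -/
def MF.stransform (i j : ℕ) (f : MF) : MF :=
  if i ≤ j then (f.transform i j).transform j i else (f.transform j i).transform i j

/-- The {i,j}-transform of a scheme. -/
def Scheme.stransform (i j : ℕ) (Φ : Scheme) : Scheme :=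
  ⟨Φ.hyps.image (MF.stransform i j), Φ.concl.stransform i j, Φ.dv⟩

/-- A metaformula contains no formula metavariables. -/
def MF.FmFree : MF → Prop
  | .phi _ => False
  | .eq _ _ => True
  | .imp a b => a.FmFree ∧ b.FmFree
  | .not a => a.FmFree
  | .all _ a => a.FmFree

/-- A scheme contains no formula metavariables. -/
def Scheme.FmFree (Φ : Scheme) : Prop := (∀ h ∈ Φ.hyps, h.FmFree) ∧ Φ.concl.FmFree

/-- A (hypothesis-free) scheme is pre-semisupertrue if all the legitimate
{i,j}-transforms of all its instances (including itself) are true. -/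
def Scheme.PreSST (Φ : Scheme) : Prop :=
  ∀ Ψ : Scheme, (Ψ = Φ ∨ Φ.Inst Ψ) → ∀ i j : ℕ, Ψ.TLegit i j → (Ψ.stransform i j).IsTrue

/-- A scheme is semisupertrue if it is true and every formula-metavariable-free
instance of it satisfies: whenever all legitimate {i,j}-transforms of all
instances of each of its hypotheses are true, all legitimate {i,j}-transforms
of all instances of its conclusion are true. -/
def Scheme.Semisupertrue (Φ : Scheme) : Prop :=
  Φ.IsTrue ∧
  ∀ Ψ : Scheme, (Ψ = Φ ∨ Φ.Inst Ψ) → Ψ.FmFree →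
    (∀ h ∈ Ψ.hyps, Scheme.PreSST ⟨∅, h, Ψ.dv⟩) → Scheme.PreSST ⟨∅, Ψ.concl, Ψ.dv⟩

/-- A metaformula is quantifier-free. -/
def MF.QFree : MF → Prop
  | .phi _ => True
  | .eq _ _ => True
  | .imp a b => a.QFree ∧ b.QFree
  | .not a => a.QFree
  | .all _ _ => False

/-- A scheme is quantifier-free. -/
def Scheme.QFree (Φ : Scheme) : Prop := (∀ h ∈ Φ.hyps, h.QFree) ∧ Φ.concl.QFree

/-! ## The axiom schemes of the system TMM
(x = x_0, y = x_1, z = x_2; φ = φ_0, ψ = φ_1, χ = φ_2, θ = φ_3, τ = φ_4) -/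

def ax_mp : Scheme := ⟨{.phi 0, .imp (.phi 0) (.phi 1)}, .phi 1, ∅⟩

def ax_minimp : Scheme :=
  ⟨∅, .imp (.phi 0) (.imp (.imp (.phi 1) (.phi 2))
      (.imp (.imp (.imp (.phi 3) (.phi 1)) (.imp (.phi 2) (.phi 4)))
        (.imp (.phi 1) (.phi 4)))), ∅⟩

def ax_peirce : Scheme := ⟨∅, .imp (.imp (.imp (.phi 0) (.phi 1)) (.phi 0)) (.phi 0), ∅⟩

def ax_contrap : Scheme :=
  ⟨∅, .imp (.imp (.phi 0) (.not (.phi 1))) (.imp (.phi 1) (.not (.phi 0))), ∅⟩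

def ax_notelim : Scheme := ⟨∅, .imp (.not (.phi 0)) (.imp (.phi 0) (.phi 1)), ∅⟩

def ax_gen : Scheme := ⟨{.phi 0}, .all 0 (.phi 0), ∅⟩

def ax_ALLdistr : Scheme :=
  ⟨∅, .imp (.all 0 (.imp (.phi 0) (.phi 1))) (.imp (.all 0 (.phi 0)) (.all 0 (.phi 1))), ∅⟩

def ax_spec : Scheme := ⟨∅, .imp (.all 0 (.phi 0)) (.phi 0), ∅⟩

def ax_modal5 : Scheme :=
  ⟨∅, .imp (.not (.all 0 (.phi 0))) (.all 0 (.not (.all 0 (.phi 0)))), ∅⟩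

def ax_vacGen : Scheme := ⟨∅, .imp (.phi 0) (.all 0 (.phi 0)), {s(MV.vr 0, MV.fm 0)}⟩

def ax_ALLcomm : Scheme :=
  ⟨∅, .imp (.all 0 (.all 1 (.phi 0))) (.all 1 (.all 0 (.phi 0))), ∅⟩

def ax_EQrefl : Scheme := ⟨∅, .eq 0 0, ∅⟩

def ax_EQsymm : Scheme := ⟨∅, .imp (.eq 0 1) (.eq 1 0), ∅⟩

def ax_EQtrans : Scheme := ⟨∅, .imp (.eq 0 1) (.imp (.eq 1 2) (.eq 0 2)), ∅⟩

def ax_denot : Scheme :=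
  ⟨∅, .imp (.eq 0 0) (.not (.all 1 (.not (.eq 1 0)))), {s(MV.vr 0, MV.vr 1)}⟩

def ax_subst : Scheme :=
  ⟨∅, .all 0 (.imp (.eq 0 1) (.imp (.phi 0) (.all 0 (.imp (.eq 0 1) (.phi 0))))),
    {s(MV.vr 0, MV.vr 1), s(MV.vr 1, MV.fm 0)}⟩

def ax_ALLeq : Scheme :=
  ⟨∅, .imp (.all 0 (.eq 0 1)) (.imp (.all 0 (.phi 0)) (.all 1 (.phi 0))), ∅⟩

def ax_genEq : Scheme :=
  ⟨∅, .imp (.not (.all 0 (.eq 0 1)))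
      (.imp (.not (.all 0 (.eq 0 2))) (.imp (.eq 1 2) (.all 0 (.eq 1 2)))), ∅⟩

def ax_modalD : Scheme := ⟨∅, .imp (.all 0 (.not (.phi 0))) (.not (.all 0 (.phi 0))), ∅⟩

def ax_modal4 : Scheme := ⟨∅, .imp (.all 0 (.phi 0)) (.all 0 (.all 0 (.phi 0))), ∅⟩

/-- The system TMM. -/
def TMM : Set Scheme :=
  {ax_mp, ax_minimp, ax_peirce, ax_contrap, ax_notelim, ax_gen, ax_ALLdistr, ax_spec,
   ax_modal5, ax_vacGen, ax_ALLcomm, ax_EQrefl, ax_EQsymm, ax_EQtrans, ax_denot,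
   ax_subst, ax_ALLeq, ax_genEq}

/-- The subsystem T. -/
def Tsys : Set Scheme :=
  {ax_mp, ax_minimp, ax_peirce, ax_contrap, ax_notelim, ax_gen, ax_ALLdistr, ax_vacGen,
   ax_EQrefl, ax_EQsymm, ax_EQtrans, ax_denot}

/-- Interpretation in a one-element domain, with negation constantly true;
the formula metavariable φ_1 is false and all others are true. -/
def MF.ev : MF → Prop
  | .phi i => i ≠ 1
  | .eq _ _ => True
  | .imp a b => a.ev → b.ev
  | .not _ => True
  | .all _ a => a.ev

/-- Every axiom scheme of TMM other than notelim preserves truth. -/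
theorem ev_sound (Ξ : Scheme) (hΞ : Ξ ∈ TMM \ {ax_notelim}) (σ : Subst)
    (hh : ∀ h ∈ Ξ.hyps, (h.substMF σ).ev) : (Ξ.concl.substMF σ).ev := by
  obtain ⟨h, hn⟩ := hΞ
  simp only [TMM, Set.mem_insert_iff, Set.mem_singleton_iff] at h hn
  rcases h with h | h | h | h | h | h | h | h | h | h | h | h | h | h | h | h | h | h
  case inr.inr.inr.inr.inl => exact absurd h hn
  all_goals
    subst h
    clear hn
    simp only [ax_mp, ax_minimp, ax_peirce, ax_contrap, ax_gen, ax_ALLdistr, ax_spec,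
      ax_modal5, ax_vacGen, ax_ALLcomm, ax_EQrefl, ax_EQsymm, ax_EQtrans, ax_denot,
      ax_subst, ax_ALLeq, ax_genEq, Finset.mem_insert, Finset.mem_singleton,
      forall_eq_or_imp, forall_eq, MF.substMF, MF.ev] at hh ⊢
    try tauto

/-- The axiom scheme notelim is not provable from TMM ∖ {notelim}. -/
theorem notelim_independent : ¬ Provable (TMM \ {ax_notelim}) ax_notelim := by
  rintro ⟨P, -, hlast, hP⟩
  have key : ∀ (k : ℕ) (hk : k < P.length), (P.get ⟨k, hk⟩).ev := by
    intro k
    induction k using Nat.strong_induction_on with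
    | _ k ih =>
      intro hk
      rcases hP k hk with h | ⟨hs, hprev, Ξ, hΞ, σ, -, hhyps, hconcl, -⟩
      · simp [ax_notelim] at h
      · simp only at hhyps hconcl
        rw [hconcl]
        refine ev_sound Ξ hΞ σ fun h hh => ?_
        have hm : h.substMF σ ∈ hs := by
          rw [hhyps]
          exact Finset.mem_image_of_mem _ hh
        obtain ⟨l, hl, he⟩ := hprev _ hm
        rw [← he]
        exact ih l hl _
  have hmem := List.mem_of_getLast? hlast
  obtain ⟨k, hk⟩ := List.mem_iff_get.mp hmem
  have := key k.1 k.2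
  rw [show (⟨k.1, k.2⟩ : Fin P.length) = k from rfl, hk] at this
  simp [ax_notelim, MF.ev] at this
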